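/- Let K be a number field whose ring of integers 𝒪 = 𝓞_K has infinitely many units. Let E(2,𝓞_K) be the subgroup of SL(2,𝓞_K) generated by all elementary matrices [[1,λ],[0,1]] and [[1,0],[λ,1]] for λ ∈ 𝓞_K, and let B be the subgroup of E(2,𝓞_K) consisting of its upper triangular matrices. Then for every λ ∈ 𝓞_K, the element u = [[1,λ],[0,1]] is a stubborn element of B: for every subgroup H ≤ B with [B : H] ≤ 2 there exists an integer k > 0 such that uᵏ lies in the commutator subgroup [H,H]. -/

import Mathlib

open NumberField

/-- The elementary subgroup `E(2,R)` of `SL(2,R)`: the subgroup generated by the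
elementary matrices `[[1,t],[0,1]]` and `[[1,0],[t,1]]` for `t ∈ R`. -/
def elementarySubgroup (R : Type*) [CommRing R] :
    Subgroup (Matrix.SpecialLinearGroup (Fin 2) R) :=
  Subgroup.closure {g | ∃ t : R,
    (g : Matrix (Fin 2) (Fin 2) R) = !![1, t; 0, 1] ∨
    (g : Matrix (Fin 2) (Fin 2) R) = !![1, 0; t, 1]}

/-- The subgroup of upper triangular matrices in `SL(2,R)`. -/
def upperTriangularSL2 (R : Type*) [CommRing R] :
    Subgroup (Matrix.SpecialLinearGroup (Fin 2) R) where
  carrier := {g | (g : Matrix (Fin 2) (Fin 2) R) 1 0 = 0}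
  one_mem' := by
    simp [Matrix.SpecialLinearGroup.coe_one, Matrix.one_apply_ne]
  mul_mem' := by
    intro a b ha hb
    simp only [Set.mem_setOf_eq] at *
    rw [Matrix.SpecialLinearGroup.coe_mul, Matrix.mul_apply, Fin.sum_univ_two, ha, hb]
    ring
  inv_mem' := by
    intro a ha
    simp only [Set.mem_setOf_eq] at *
    rw [Matrix.SpecialLinearGroup.SL2_inv_expl]
    simp [ha]

/-! Conjugation by `diag(e, e⁻¹)` multiplies the entry of an upper unipotent matrix by `e ^ 2`, so
the commutator of `diag(e, e⁻¹)` with `[[1, t], [0, 1]]` is `[[1, (e ^ 2 - 1) t], [0, 1]]`. A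
subgroup of finite index contains all `n`-th powers for some `n > 0`. As a domain has only finitely
many roots of unity of given order, some unit `e` satisfies `e ^ (2 n) ≠ 1`, and since the ring is
algebraic over `ℤ`, the element `e ^ (2 n) - 1` divides a positive integer `k`, say
`k = (e ^ (2 n) - 1) y`. The commutator of the `n`-th powers of `diag(e, e⁻¹)` and
`[[1, y λ], [0, 1]]` is then the `k n`-th power of `[[1, λ], [0, 1]]`. -/

section

open Matrix.SpecialLinearGroup
open scoped MatrixGroups commutatorElement

theorem transvection_pow {ι R : Type*} [DecidableEq ι] [Fintype ι] [CommRing R] {i j : ι}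
    (hij : i ≠ j) (t : R) (k : ℕ) : transvection hij t ^ k = transvection hij (k * t) := by
  induction k with
  | zero => simp
  | succ k ih => rw [pow_succ, ih, ← transvection_add, Nat.cast_succ, add_one_mul]

section CommRing

variable {R : Type*} [CommRing R]

theorem coe_transvection_zero_one (t : R) :
    (transvection (zero_ne_one (α := Fin 2)) t).1 = !![1, t; 0, 1] := by
  ext i j
  fin_cases i <;> fin_cases j <;> simp [transvection_coe]

theorem coe_transvection_one_zero (t : R) :
    (transvection (one_ne_zero (α := Fin 2)) t).1 = !![1, 0; t, 1] := by
  ext i j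
  fin_cases i <;> fin_cases j <;> simp [transvection_coe]

/-- The diagonal matrices `diag(e, e⁻¹)`, `e` a unit, as a homomorphism into `SL(2, R)`. Their
commutators with transvections produce the elements of `⁅H, H⁆` that are needed. Mathlib's
`Matrix.SpecialLinearGroup.diag2` is available only over a field. -/
def diagUnit : Rˣ →* SL(2, R) where
  toFun e := ⟨!![(e : R), 0; 0, (e⁻¹ : Rˣ)], by simp⟩
  map_one' := by ext i j; fin_cases i <;> fin_cases j <;> simp
  map_mul' e f := Subtype.ext <| .symm <| (coe_mul _ _).trans <| by simp [mul_comm]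

theorem coe_diagUnit (e : Rˣ) : (diagUnit e).1 = !![(e : R), 0; 0, (e⁻¹ : Rˣ)] := rfl

theorem diagUnit_eq_prod_transvection (e : Rˣ) :
    diagUnit e =
      transvection zero_ne_one (e : R) * transvection one_ne_zero (-(e⁻¹ : Rˣ) : R) *
        transvection zero_ne_one (e : R) *
      (transvection zero_ne_one (-1) * transvection one_ne_zero 1 *
        transvection zero_ne_one (-1)) := by
  apply Subtype.ext
  simp [coe_diagUnit, coe_transvection_zero_one, coe_transvection_one_zero]

theorem commutator_diagUnit_transvection (e : Rˣ) (t : R) :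
    ⁅diagUnit e, (transvection zero_ne_one t : SL(2, R))⁆ =
      transvection zero_ne_one (((e : R) ^ 2 - 1) * t) := by
  rw [commutatorElement_def, mul_inv_eq_iff_eq_mul, mul_inv_eq_iff_eq_mul, ← transvection_add]
  apply Subtype.ext
  suffices (e : R) * t = ((e : R) ^ 2 - 1) * t * (e⁻¹ : Rˣ) + t * (e⁻¹ : Rˣ) by
    simpa [coe_diagUnit, coe_transvection_zero_one, add_mul]
  linear_combination -(e : R) * t * e.mul_inv

theorem transvection_zero_one_mem_elementarySubgroup (t : R) :
    transvection zero_ne_one t ∈ elementarySubgroup R :=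
  Subgroup.subset_closure ⟨t, .inl (coe_transvection_zero_one t)⟩

theorem transvection_one_zero_mem_elementarySubgroup (t : R) :
    transvection one_ne_zero t ∈ elementarySubgroup R :=
  Subgroup.subset_closure ⟨t, .inr (coe_transvection_one_zero t)⟩

theorem diagUnit_mem_elementarySubgroup (e : Rˣ) : diagUnit e ∈ elementarySubgroup R := by
  rw [diagUnit_eq_prod_transvection]
  apply_rules [mul_mem, transvection_zero_one_mem_elementarySubgroup,
    transvection_one_zero_mem_elementarySubgroup]

theorem transvection_zero_one_mem_upperTriangularSL2 (t : R) :
    transvection zero_ne_one t ∈ upperTriangularSL2 R :=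
  congrFun₂ (coe_transvection_zero_one t) 1 0

theorem diagUnit_mem_upperTriangularSL2 (e : Rˣ) : diagUnit e ∈ upperTriangularSL2 R := rfl

end CommRing

theorem exists_unit_pow_ne_one {R : Type*} [CommRing R] [IsDomain R] [Infinite Rˣ] {n : ℕ}
    (hn : n ≠ 0) : ∃ e : Rˣ, e ^ n ≠ 1 := by
  by_contra! h
  have : NeZero n := ⟨hn⟩
  have : Finite Rˣ := .of_injective (β := rootsOfUnity n R) (fun e ↦ ⟨e, h e⟩)
    fun _ _ ↦ congrArg Subtype.val
  exact not_finite Rˣ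

theorem exists_pos_dvd_natCast {R : Type*} [CommRing R] {a : R} (halg : IsAlgebraic ℤ a)
    (ha : a ∈ nonZeroDivisors R) : ∃ k : ℕ, 0 < k ∧ a ∣ (k : R) := by
  obtain ⟨r, hr, hdvd⟩ := halg.exists_nonzero_dvd ha
  refine ⟨r.natAbs, Int.natAbs_pos.2 hr, hdvd.trans ?_⟩
  simpa using map_dvd (Int.castRingHom R) (Int.dvd_natAbs.2 dvd_rfl : r ∣ r.natAbs)

theorem exists_transvection_pow_eq_commutator_pow {R : Type*} [CommRing R] [IsDomain R]
    [Algebra.IsAlgebraic ℤ R] [Infinite Rˣ] {n : ℕ} (hn : 0 < n) (t : R) :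
    ∃ k : ℕ, 0 < k ∧ ∃ (e : Rˣ) (s : R), transvection zero_ne_one t ^ k =
      ⁅diagUnit e ^ n, (transvection zero_ne_one s ^ n : SL(2, R))⁆ := by
  obtain ⟨e, he⟩ : ∃ e : Rˣ, e ^ (n * 2) ≠ 1 := exists_unit_pow_ne_one (by positivity)
  have hne : ((e ^ n : Rˣ) : R) ^ 2 - 1 ≠ 0 := by
    rwa [sub_ne_zero, ← Units.val_pow_eq_pow_val, Ne, Units.val_eq_one, ← pow_mul]
  obtain ⟨k, hk, y, hy⟩ := exists_pos_dvd_natCast (Algebra.IsAlgebraic.isAlgebraic _)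
    (mem_nonZeroDivisors_of_ne_zero hne)
  refine ⟨k * n, by positivity, e, y * t, ?_⟩
  calc transvection zero_ne_one t ^ (k * n)
    _ = transvection zero_ne_one ((((e ^ n : Rˣ) : R) ^ 2 - 1) * (n * (y * t))) := by
      rw [transvection_pow, Nat.cast_mul, hy]
      congr 1
      ring
    _ = ⁅diagUnit e ^ n, transvection zero_ne_one (y * t) ^ n⁆ := by
      rw [← map_pow, transvection_pow, commutator_diagUnit_transvection]

theorem pow_factorial_index_mem {G : Type*} [Group G] (H : Subgroup G) [H.FiniteIndex] (g : G) :
    g ^ H.index.factorial ∈ H :=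
  H.pow_mem_of_index_ne_zero_of_dvd Subgroup.FiniteIndex.index_ne_zero g
    fun _ hpos hle ↦ Nat.dvd_factorial hpos hle

theorem elementary_unipotent_is_stubborn_general {R : Type*} [CommRing R] [IsDomain R]
    [Algebra.IsAlgebraic ℤ R] [Infinite Rˣ] {B : Subgroup SL(2, R)}
    (hB : elementarySubgroup R ⊓ upperTriangularSL2 R ≤ B) {u : B} {lam : R}
    (hu : u.1.1 = !![1, lam; 0, 1]) (H : Subgroup B) [H.FiniteIndex] :
    ∃ k : ℕ, 0 < k ∧ u ^ k ∈ ⁅H, H⁆ := by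
  obtain ⟨k, hk, e, s, hpow⟩ :=
    exists_transvection_pow_eq_commutator_pow H.index.factorial_pos lam
  let d : B := ⟨diagUnit e, hB
    ⟨diagUnit_mem_elementarySubgroup e, diagUnit_mem_upperTriangularSL2 e⟩⟩
  let v : B := ⟨transvection zero_ne_one s, hB
    ⟨transvection_zero_one_mem_elementarySubgroup s,
      transvection_zero_one_mem_upperTriangularSL2 s⟩⟩
  have hu' : u.1 = transvection zero_ne_one lam :=
    Subtype.ext (hu.trans (coe_transvection_zero_one lam).symm)
  have hcomm : u ^ k = ⁅d ^ H.index.factorial, v ^ H.index.factorial⁆ :=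
    Subtype.ext <| by rwa [Subgroup.coe_pow, hu']
  exact ⟨k, hk, hcomm ▸ Subgroup.commutator_mem_commutator
    (pow_factorial_index_mem H d) (pow_factorial_index_mem H v)⟩

end

/-- Let `K` be a number field whose ring of integers has infinitely many
units, `E = E(2, 𝓞 K)` the elementary subgroup of `SL(2, 𝓞 K)`, and `B ≤ E` its subgroup
of upper triangular matrices. Then for every `lam : 𝓞 K`, the element `u = [[1,lam],[0,1]]`
of `B` is stubborn in `B`: for every subgroup `H` of `B` of index at most 2 there is a
`k > 0` with `u ^ k ∈ [H, H]`. -/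
theorem elementary_unipotent_is_stubborn
    (K : Type*) [Field K] [NumberField K]
    (hunits : Infinite (𝓞 K)ˣ)
    (lam : 𝓞 K)
    -- `B` is the subgroup of upper triangular matrices of `E(2, 𝓞 K)`
    (B : Subgroup (Matrix.SpecialLinearGroup (Fin 2) (𝓞 K)))
    (hB : B = elementarySubgroup (𝓞 K) ⊓ upperTriangularSL2 (𝓞 K))
    -- `u = [[1, lam],[0, 1]]`, as an element of `B`
    (u : B)
    (hu : ((u : Matrix.SpecialLinearGroup (Fin 2) (𝓞 K)) : Matrix (Fin 2) (Fin 2) (𝓞 K)) =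
      !![1, lam; 0, 1]) :
    ∀ H : Subgroup B, (H.index = 1 ∨ H.index = 2) →
      ∃ k : ℕ, 0 < k ∧ u ^ k ∈ ⁅H, H⁆ := by
  intro H hH
  have : H.FiniteIndex := ⟨by rcases hH with h | h <;> simp [h]⟩
  exact elementary_unipotent_is_stubborn_general hB.ge hu H
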